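/- Let X and Y be real Banach spaces and let f : X → Y be a local C¹-diffeomorphism satisfying the Hadamard integral condition ∫₀^∞ inf_{‖x‖≤ρ} ‖df(x)^{-1}‖^{-1} dρ = ∞. Then f is norm-coercive and sup_{‖x‖≤ρ} ‖df(x)^{-1}‖ < ∞ for every ρ > 0. -/

import Mathlib

/-!
Write `m ρ = inf_{‖x‖ ≤ ρ} ‖df(x)⁻¹‖⁻¹` and `M r = ∫₀^r m`. Since `m` is nonincreasing and its
integral over `(0, ∞)` diverges, `m` never vanishes, which is the bound on `‖df(x)⁻¹‖` over balls,
and `M` is unbounded.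

For coercivity one proves `M ‖x‖ ≤ ‖f x - f 0‖`. If `g` is a continuous lift through `f` of the
segment `s ↦ f 0 + s • v` with `g 0 = 0`, then `g' = df(g)⁻¹ v`, so `m ‖g‖ * ‖g'‖ ≤ ‖v‖`, and
comparing Dini derivatives gives `M ‖g s‖ ≤ s * ‖v‖` (`IsSegmentLift.primitive_norm_le`). Hence
lifts stay in a fixed ball and are uniformly Lipschitz, and by a continuation argument every segment
issuing from `f 0` lifts over all of `[0, 1]` (`exists_segmentLift`). Let `Φ x` be the endpoint of
the lift of the segment from `f 0` to `f x`. Lifts through a local homeomorphism depend continuously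
on the path, so `Φ` is continuous with `f ∘ Φ = f` and `Φ 0 = 0`; by uniqueness of lifts `Φ = id`
(`exists_segmentLift_endpoint`). The bound at `s = 1` is then `M ‖x‖ ≤ ‖f x - f 0‖`.
-/

open Filter Topology Set

noncomputable section

/-- Clarke generalized directional derivative of `F` at `x` in direction `v`. -/
def clarkeDeriv {X : Type*} [NormedAddCommGroup X] [NormedSpace ℝ X]
    (F : X → ℝ) (x v : X) : ℝ :=
  Filter.limsup (fun p : X × ℝ => (F (x + p.1 + p.2 • v) - F (x + p.1)) / p.2)
    ((nhds (0 : X)) ×ˢ (nhdsWithin (0 : ℝ) (Set.Ioi 0)))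

/-- Clarke generalized gradient of `F` at `x`. -/
def clarkeSubdiff {X : Type*} [NormedAddCommGroup X] [NormedSpace ℝ X]
    (F : X → ℝ) (x : X) : Set (X →L[ℝ] ℝ) :=
  {w | ∀ v, w v ≤ clarkeDeriv F x v}

/-- `λ_F(x) = min_{w* ∈ ∂F(x)} ‖w*‖`. -/
def lambdaF {X : Type*} [NormedAddCommGroup X] [NormedSpace ℝ X]
    (F : X → ℝ) (x : X) : ℝ :=
  sInf ((fun w : X →L[ℝ] ℝ => ‖w‖) '' clarkeSubdiff F x)

/-- The weighted Chang Palais–Smale condition for the weight `h`. -/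
def WeightedChangPS {X : Type*} [NormedAddCommGroup X] [NormedSpace ℝ X]
    (F : X → ℝ) (h : ℝ → ℝ) : Prop :=
  ∀ x : ℕ → X, (∃ C : ℝ, ∀ n, |F (x n)| ≤ C) →
    Filter.Tendsto (fun n => lambdaF F (x n) * (1 + h ‖x n‖)) Filter.atTop (nhds 0) →
    ∃ (z : X) (φ : ℕ → ℕ), StrictMono φ ∧
      Filter.Tendsto (fun n => x (φ n)) Filter.atTop (nhds z)

/-- The Banach constant `Sur A = inf_{‖v*‖=1} ‖A* v*‖`. -/
def surBanach {X Y : Type*} [NormedAddCommGroup X] [NormedSpace ℝ X]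
    [NormedAddCommGroup Y] [NormedSpace ℝ Y] (A : X →L[ℝ] Y) : ℝ :=
  sInf ((fun v : Y →L[ℝ] ℝ => ‖v.comp A‖) '' {v : Y →L[ℝ] ℝ | ‖v‖ = 1})

/-- Norm-coercivity: `‖f x‖ → ∞` as `‖x‖ → ∞`. -/
def NormCoercive {X Y : Type*} [NormedAddCommGroup X] [NormedAddCommGroup Y]
    (f : X → Y) : Prop :=
  Filter.Tendsto (fun x => ‖f x‖) (Filter.comap (fun x : X => ‖x‖) Filter.atTop) Filter.atTop

/-- `hadamardWeight f' ρ = inf_{‖x‖ ≤ ρ} ‖df(x)⁻¹‖⁻¹`, the integrand of the Hadamard condition. -/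
def hadamardWeight {X Y : Type*} [NormedAddCommGroup X] [NormedSpace ℝ X]
    [NormedAddCommGroup Y] [NormedSpace ℝ Y] (f' : X → X ≃L[ℝ] Y) (ρ : ℝ) : ℝ :=
  sInf ((fun x : X => ‖((f' x).symm : Y →L[ℝ] X)‖⁻¹) '' Metric.closedBall 0 ρ)

/-- `g` lifts the segment `s ↦ f 0 + s • v`, `0 ≤ s ≤ T`, through `f`, starting at the origin. -/
def IsSegmentLift {X Y : Type*} [NormedAddCommGroup X]
    [NormedAddCommGroup Y] [NormedSpace ℝ Y] (f : X → Y) (v : Y) (T : ℝ) (g : ℝ → X) : Prop :=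
  ContinuousOn g (Icc 0 T) ∧ g 0 = 0 ∧ ∀ s ∈ Icc 0 T, f (g s) = f 0 + s • v

/-! ### The weight of the Hadamard condition -/

section Weight

variable {X Y : Type*} [NormedAddCommGroup X] [NormedSpace ℝ X]
  [NormedAddCommGroup Y] [NormedSpace ℝ Y] (f' : X → X ≃L[ℝ] Y)

lemma hadamardWeight_nonneg (ρ : ℝ) : 0 ≤ hadamardWeight f' ρ := by
  apply Real.sInf_nonneg
  rintro _ ⟨x, -, rfl⟩
  positivity

lemma hadamardWeight_le {ρ : ℝ} {x : X} (hx : ‖x‖ ≤ ρ) :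
    hadamardWeight f' ρ ≤ ‖((f' x).symm : Y →L[ℝ] X)‖⁻¹ := by
  apply csInf_le
  · refine ⟨0, ?_⟩
    rintro _ ⟨x, -, rfl⟩
    positivity
  · exact ⟨x, by simpa using hx, rfl⟩

lemma norm_symm_le_inv_hadamardWeight {ρ : ℝ} {x : X} (hx : ‖x‖ ≤ ρ)
    (hpos : 0 < hadamardWeight f' ρ) :
    ‖((f' x).symm : Y →L[ℝ] X)‖ ≤ (hadamardWeight f' ρ)⁻¹ :=
  le_inv_of_le_inv₀ hpos (hadamardWeight_le f' hx)

lemma hadamardWeight_antitoneOn : AntitoneOn (hadamardWeight f') (Ici 0) := by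
  intro a ha b _ hab
  refine le_csInf ⟨_, 0, by simpa using ha, rfl⟩ ?_
  rintro _ ⟨x, hx, rfl⟩
  exact hadamardWeight_le f' ((by simpa using hx : ‖x‖ ≤ a).trans hab)

end Weight

/-! ### Primitives of nonincreasing weights -/

section Primitive

variable {m : ℝ → ℝ}

lemma intervalIntegrable_of_antitoneOn_Ici (hm : AntitoneOn m (Ici 0)) {a b : ℝ}
    (ha : 0 ≤ a) (hb : 0 ≤ b) : IntervalIntegrable m MeasureTheory.volume a b :=
  (hm.mono fun _ hx => (le_min ha hb).trans hx.1).intervalIntegrable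

/-- The concave primitive of a nonincreasing `m` lies below the line of slope `m a` through its
value at `a`. -/
lemma primitive_sub_le (hm : AntitoneOn m (Ici 0)) {a b : ℝ} (ha : 0 ≤ a) (hab : a ≤ b) :
    (∫ t in (0 : ℝ)..b, m t) - ∫ t in (0 : ℝ)..a, m t ≤ m a * (b - a) := by
  rw [intervalIntegral.integral_interval_sub_left
    (intervalIntegrable_of_antitoneOn_Ici hm le_rfl (ha.trans hab))
    (intervalIntegrable_of_antitoneOn_Ici hm le_rfl ha)]
  calc ∫ t in a..b, m t ≤ ∫ _ in a..b, m a := by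
        refine intervalIntegral.integral_mono_on hab
          (intervalIntegrable_of_antitoneOn_Ici hm ha (ha.trans hab))
          intervalIntegrable_const fun t ht => hm ha (ha.trans ht.1) ht.1
    _ = m a * (b - a) := by simp [mul_comm]

lemma primitive_mono (hm : AntitoneOn m (Ici 0)) (h0 : ∀ t, 0 ≤ m t) {a b : ℝ} (ha : 0 ≤ a)
    (hab : a ≤ b) : (∫ t in (0 : ℝ)..a, m t) ≤ ∫ t in (0 : ℝ)..b, m t := by
  rw [← sub_nonneg, intervalIntegral.integral_interval_sub_left
    (intervalIntegrable_of_antitoneOn_Ici hm le_rfl (ha.trans hab))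
    (intervalIntegrable_of_antitoneOn_Ici hm le_rfl ha)]
  exact intervalIntegral.integral_nonneg hab fun t _ => h0 t

lemma exists_lt_primitive (hm : AntitoneOn m (Ici 0)) (h0 : ∀ t, 0 ≤ m t)
    (htop : ∫⁻ t in Ioi (0 : ℝ), ENNReal.ofReal (m t) = ⊤) (K : ℝ) :
    ∃ r, 0 ≤ r ∧ K < ∫ t in (0 : ℝ)..r, m t := by
  by_contra! hK
  have hint : MeasureTheory.IntegrableOn m (Ioi 0) := by
    refine MeasureTheory.integrableOn_Ioi_of_intervalIntegral_norm_bounded (l := atTop)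
      (b := fun n : ℕ => (n : ℝ)) K 0 (fun n => ?_) tendsto_natCast_atTop_atTop
      (Eventually.of_forall fun n => ?_)
    · rw [← intervalIntegrable_iff_integrableOn_Ioc_of_le n.cast_nonneg]
      exact intervalIntegrable_of_antitoneOn_Ici hm le_rfl n.cast_nonneg
    · simpa [Real.norm_eq_abs, abs_of_nonneg (h0 _)] using hK n n.cast_nonneg
  exact hint.lintegral_lt_top.ne htop

/-- A nonincreasing weight with divergent integral cannot reach zero. -/
lemma weight_pos (hm : AntitoneOn m (Ici 0)) (h0 : ∀ t, 0 ≤ m t)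
    (htop : ∫⁻ t in Ioi (0 : ℝ), ENNReal.ofReal (m t) = ⊤) {ρ : ℝ} (hρ : 0 ≤ ρ) :
    0 < m ρ := by
  refine lt_of_le_of_ne (h0 ρ) fun h => ?_
  obtain ⟨r, hr, hlt⟩ := exists_lt_primitive hm h0 htop (∫ t in (0 : ℝ)..ρ, m t)
  rcases le_total r ρ with hrρ | hrρ
  · exact absurd (primitive_mono hm h0 hr hrρ) hlt.not_ge
  · have := primitive_sub_le hm hρ hrρ
    rw [← h] at this
    linarith

end Primitive

/-! ### Lifting segments -/

section Lifting

lemma IsSegmentLift.mono {X Y : Type*} [NormedAddCommGroup X] [NormedAddCommGroup Y]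
    [NormedSpace ℝ Y] {f : X → Y} {v : Y} {S T : ℝ} {g : ℝ → X} (hg : IsSegmentLift f v T g)
    (h : S ≤ T) : IsSegmentLift f v S g :=
  ⟨hg.1.mono (Icc_subset_Icc_right h), hg.2.1, fun s hs => hg.2.2 s ⟨hs.1, hs.2.trans h⟩⟩

variable {X Y : Type*} [NormedAddCommGroup X] [NormedSpace ℝ X] [CompleteSpace X]
  [NormedAddCommGroup Y] [NormedSpace ℝ Y] {f : X → Y} {f' : X → X ≃L[ℝ] Y}

lemma isLocalHomeomorph_of_hasStrictFDerivAt
    (hs : ∀ x, HasStrictFDerivAt f (f' x : X →L[ℝ] Y) x) : IsLocalHomeomorph f := fun x =>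
  ⟨(hs x).toOpenPartialHomeomorph f, (hs x).mem_toOpenPartialHomeomorph_source, rfl⟩

lemma IsSegmentLift.eqOn (hs : ∀ x, HasStrictFDerivAt f (f' x : X →L[ℝ] Y) x)
    {v : Y} {T : ℝ} {g₁ g₂ : ℝ → X} (h₁ : IsSegmentLift f v T g₁) (h₂ : IsSegmentLift f v T g₂) :
    EqOn g₁ g₂ (Icc 0 T) := by
  intro s hsT
  refine (T2Space.isSeparatedMap f).eqOn_of_comp_eqOn
    (isLocalHomeomorph_of_hasStrictFDerivAt hs).isLocallyInjective isPreconnected_Icc h₁.1 h₂.1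
    (fun s hs => ?_) (a := 0) ⟨le_rfl, hsT.1.trans hsT.2⟩ (h₁.2.1.trans h₂.2.1.symm) hsT
  simp [h₁.2.2 s hs, h₂.2.2 s hs]

/-- Near each parameter a lift is the local inverse of `f` applied to the segment. -/
lemma IsSegmentLift.hasDerivWithinAt (hs : ∀ x, HasStrictFDerivAt f (f' x : X →L[ℝ] Y) x)
    {v : Y} {T : ℝ} {g : ℝ → X} (hg : IsSegmentLift f v T g) {t : ℝ} (ht : t ∈ Icc 0 T) :
    HasDerivWithinAt g ((f' (g t)).symm v) (Icc 0 T) t := by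
  have hinv : HasFDerivAt ((hs (g t)).localInverse f _ _) ((f' (g t)).symm : Y →L[ℝ] X)
      (f 0 + t • v) := by
    rw [← hg.2.2 t ht]
    exact (hs (g t)).to_localInverse.hasFDerivAt
  have hseg : HasDerivWithinAt (fun s : ℝ => f 0 + s • v) v (Icc 0 T) t := by
    simpa using (((hasDerivAt_id t).smul_const v).const_add (f 0)).hasDerivWithinAt
  have hcomp := hinv.comp_hasDerivWithinAt t hseg
  refine hcomp.congr_of_eventuallyEq_of_mem ?_ ht
  have hev := (hg.1 t ht).eventually (hs (g t)).eventually_left_inverse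
  filter_upwards [hev, self_mem_nhdsWithin] with s hs1 hs2
  simp only [Function.comp_apply, ← hg.2.2 s hs2]
  exact hs1.symm

/-- A-priori bound on lifts: the upper right Dini derivative of `s ↦ ∫₀^{‖g s‖} m` is at most
`‖v‖`, because `‖g'‖ ≤ ‖v‖ / m ‖g‖` and `m` is nonincreasing. -/
lemma IsSegmentLift.primitive_norm_le (hs : ∀ x, HasStrictFDerivAt f (f' x : X →L[ℝ] Y) x)
    (hpos : ∀ ρ, 0 ≤ ρ → 0 < hadamardWeight f' ρ)
    {v : Y} {T : ℝ} {g : ℝ → X} (hg : IsSegmentLift f v T g) {t : ℝ} (ht : t ∈ Icc 0 T) :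
    ∫ r in (0 : ℝ)..‖g t‖, hadamardWeight f' r ≤ t * ‖v‖ := by
  set m := hadamardWeight f' with hm_def
  have hm : AntitoneOn m (Ici 0) := hadamardWeight_antitoneOn f'
  have h0 : ∀ t, 0 ≤ m t := hadamardWeight_nonneg f'
  have hMc : ContinuousOn (fun r => ∫ t in (0 : ℝ)..r, m t) (Ici 0) := by
    -- on `[0, ∞)` the primitive is Lipschitz with constant `m 0`
    refine (LipschitzOnWith.of_le_add_mul (m 0).toNNReal fun a ha b hb => ?_).continuousOn
    rw [Real.coe_toNNReal _ (h0 0)]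
    rcases le_total a b with hab | hab
    · have := primitive_mono hm h0 ha hab
      have := mul_nonneg (h0 0) (dist_nonneg (x := a) (y := b))
      linarith
    · have h1 := primitive_sub_le hm hb hab
      have h2 : m b * (a - b) ≤ m 0 * (a - b) :=
        mul_le_mul_of_nonneg_right (hm self_mem_Ici hb hb) (sub_nonneg.2 hab)
      rw [Real.dist_eq, abs_of_nonneg (sub_nonneg.2 hab)]
      linarith
  refine image_le_of_liminf_slope_right_le_deriv_boundary
    (f := fun s => ∫ r in (0 : ℝ)..‖g s‖, m r) (B := fun s => s * ‖v‖) (B' := fun _ => ‖v‖)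
    (hMc.comp hg.1.norm fun s _ => norm_nonneg (g s)) (by simp [hg.2.1])
    (by fun_prop) (fun x _ => ?_) (fun x hx q hq => ?_) ht
  · simpa using ((hasDerivAt_id x).mul_const ‖v‖).hasDerivWithinAt
  · have hmx := hpos ‖g x‖ (norm_nonneg _)
    have hder : HasDerivWithinAt g ((f' (g x)).symm v) (Ioi x) x :=
      ((hg.hasDerivWithinAt hs ⟨hx.1, hx.2.le⟩).mono (Icc_subset_Icc_left hx.1)).mono_of_mem_nhdsWithin
        (Icc_mem_nhdsGT hx.2)
    have hbd : ‖(f' (g x)).symm v‖ < q / m ‖g x‖ := by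
      calc ‖(f' (g x)).symm v‖ ≤ ‖((f' (g x)).symm : Y →L[ℝ] X)‖ * ‖v‖ :=
            ((f' (g x)).symm : Y →L[ℝ] X).le_opNorm v
        _ ≤ (m ‖g x‖)⁻¹ * ‖v‖ :=
            mul_le_mul_of_nonneg_right (norm_symm_le_inv_hadamardWeight f' le_rfl hmx)
              (norm_nonneg v)
        _ < (m ‖g x‖)⁻¹ * q := mul_lt_mul_of_pos_left hq (inv_pos.2 hmx)
        _ = q / m ‖g x‖ := by rw [div_eq_inv_mul]
    refine Eventually.frequently ?_
    filter_upwards [hder.limsup_slope_norm_le hbd, self_mem_nhdsWithin] with z hz hxz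
    have hzx : 0 < z - x := sub_pos.2 hxz
    rw [Real.norm_eq_abs, abs_of_pos hzx, inv_mul_lt_iff₀ hzx] at hz
    rw [slope_def_field, div_lt_iff₀ hzx]
    have hq0 : 0 < q := (norm_nonneg v).trans_lt hq
    rcases le_total ‖g x‖ ‖g z‖ with hle | hle
    · calc _ ≤ m ‖g x‖ * (‖g z‖ - ‖g x‖) := primitive_sub_le hm (norm_nonneg _) hle
        _ < m ‖g x‖ * ((z - x) * (q / m ‖g x‖)) := mul_lt_mul_of_pos_left hz hmx
        _ = q * (z - x) := by field_simp
    · have := primitive_mono hm h0 (norm_nonneg _) hle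
      have := mul_pos hq0 hzx
      linarith

/-- The a-priori bound confines all lifts to one ball, where `df⁻¹` is bounded; hence they share
a Lipschitz constant. -/
lemma exists_lipschitz_segmentLift (hs : ∀ x, HasStrictFDerivAt f (f' x : X →L[ℝ] Y) x)
    (htop : ∫⁻ t in Ioi (0 : ℝ), ENNReal.ofReal (hadamardWeight f' t) = ⊤) (v : Y) :
    ∃ L : NNReal, ∀ T ≤ 1, ∀ g : ℝ → X, IsSegmentLift f v T g → LipschitzOnWith L g (Icc 0 T) := by
  have hm := hadamardWeight_antitoneOn f'
  have h0 := hadamardWeight_nonneg f'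
  have hpos : ∀ ρ, 0 ≤ ρ → 0 < hadamardWeight f' ρ := fun ρ => weight_pos hm h0 htop
  obtain ⟨R, hR, hlt⟩ := exists_lt_primitive hm h0 htop ‖v‖
  refine ⟨((hadamardWeight f' R)⁻¹ * ‖v‖).toNNReal, fun T hT g hg => ?_⟩
  refine (convex_Icc 0 T).lipschitzOnWith_of_nnnorm_hasDerivWithin_le
    (fun t ht => hg.hasDerivWithinAt hs ht) fun t ht => ?_
  rw [← NNReal.coe_le_coe, coe_nnnorm, Real.coe_toNNReal _
    (mul_nonneg (inv_nonneg.2 (h0 R)) (norm_nonneg v))]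
  have hgR : ‖g t‖ ≤ R := by
    by_contra! hgR
    have h1 := hg.primitive_norm_le hs hpos ht
    have h2 := primitive_mono hm h0 hR hgR.le
    have h3 : t * ‖v‖ ≤ 1 * ‖v‖ :=
      mul_le_mul_of_nonneg_right (ht.2.trans hT) (norm_nonneg v)
    linarith
  exact (((f' (g t)).symm : Y →L[ℝ] X).le_opNorm v).trans
    (mul_le_mul_of_nonneg_right (norm_symm_le_inv_hadamardWeight f' hgR (hpos R hR))
      (norm_nonneg v))

/-- Lifts on all `[0, s]`, `s < T`, with a common Lipschitz constant yield one on `[0, T]`. -/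
lemma exists_segmentLift_of_forall_lt (hs : ∀ x, HasStrictFDerivAt f (f' x : X →L[ℝ] Y) x)
    {v : Y} {L : NNReal} {T : ℝ} (hT0 : 0 < T) (hT1 : T ≤ 1)
    (hL : ∀ T ≤ 1, ∀ g : ℝ → X, IsSegmentLift f v T g → LipschitzOnWith L g (Icc 0 T))
    (h : ∀ s, s < T → ∃ g : ℝ → X, IsSegmentLift f v s g) :
    ∃ g : ℝ → X, IsSegmentLift f v T g := by
  choose! g hg using h
  -- by uniqueness the endpoints `g s s` assemble all the partial lifts
  set G : ℝ → X := fun s => g s s with hG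
  have hGeq : ∀ s t, 0 ≤ s → s ≤ t → t < T → g t s = G s := fun s t h0 hst htT =>
    ((hg t htT).mono hst).eqOn hs (hg s (hst.trans_lt htT)) ⟨h0, le_rfl⟩
  have hGL : LipschitzOnWith L G (Ico 0 T) := by
    refine LipschitzOnWith.of_dist_le_mul fun s hsT t htT => ?_
    have hmax : max s t < T := max_lt hsT.2 htT.2
    rw [← hGeq s _ hsT.1 (le_max_left s t) hmax, ← hGeq t _ htT.1 (le_max_right s t) hmax]
    exact (hL _ (hmax.le.trans hT1) _ (hg _ hmax)).dist_le_mul _ ⟨hsT.1, le_max_left s t⟩ _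
      ⟨htT.1, le_max_right s t⟩
  have hcl : closure (Ico 0 T) = Icc 0 T := closure_Ico hT0.ne
  have hlim : ∀ t ∈ Icc 0 T, ∃ y, Tendsto G (𝓝[Ico 0 T] t) (𝓝 y) := by
    intro t ht
    have : (𝓝[Ico 0 T] t).NeBot := mem_closure_iff_nhdsWithin_neBot.1 (hcl ▸ ht)
    have hc : Cauchy (𝓝[Ico 0 T] t) := cauchy_nhds.mono nhdsWithin_le_nhds
    exact CompleteSpace.complete (hc.map_of_le hGL.uniformContinuousOn inf_le_right)
  have hext : EqOn (extendFrom (Ico 0 T) G) G (Ico 0 T) := fun t ht =>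
    extendFrom_eq (subset_closure ht) (hGL.continuousOn t ht)
  have hcont : ContinuousOn (extendFrom (Ico 0 T) G) (Icc 0 T) :=
    continuousOn_extendFrom hcl.ge hlim
  have hfc : Continuous f := continuous_iff_continuousAt.2 fun x => (hs x).continuousAt
  refine ⟨extendFrom (Ico 0 T) G, hcont, ?_, ?_⟩
  · rw [hext ⟨le_rfl, hT0⟩]
    exact (hg 0 hT0).2.1
  · have : EqOn (fun s => f (extendFrom (Ico 0 T) G s)) (fun s => f 0 + s • v) (Ico 0 T) := by
      intro s hsT
      simp only [hext hsT]
      exact (hg s hsT.2).2.2 s ⟨hsT.1, le_rfl⟩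
    exact this.of_subset_closure (hfc.comp_continuousOn hcont) (by fun_prop) Ico_subset_Icc_self
      hcl.ge

/-- The local inverse of `f` at the endpoint prolongs a lift. -/
lemma IsSegmentLift.exists_extension (hs : ∀ x, HasStrictFDerivAt f (f' x : X →L[ℝ] Y) x)
    {v : Y} {T b : ℝ} {g : ℝ → X} (hg : IsSegmentLift f v T g) (hT0 : 0 ≤ T) (hTb : T < b) :
    ∃ S ∈ Ioc T b, ∃ g' : ℝ → X, IsSegmentLift f v S g' := by
  set φ := (hs (g T)).toOpenPartialHomeomorph f with hφ
  have hsrc : g T ∈ φ.source := (hs (g T)).mem_toOpenPartialHomeomorph_source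
  have hend : f (g T) = f 0 + T • v := hg.2.2 T ⟨hT0, le_rfl⟩
  have hpc : Continuous fun s : ℝ => f 0 + s • v := by fun_prop
  have hnhds : (fun s : ℝ => f 0 + s • v) ⁻¹' φ.target ∈ 𝓝 T := by
    refine (φ.open_target.preimage hpc).mem_nhds ?_
    rw [mem_preimage, ← hend]
    exact φ.map_source hsrc
  obtain ⟨u, hu, hsub⟩ := mem_nhdsGE_iff_exists_Icc_subset.1
    (mem_nhdsWithin_of_mem_nhds hnhds)
  have hS : T < min u b := lt_min hu hTb
  have hright : ∀ s ∈ Icc T (min u b), f 0 + s • v ∈ φ.target := fun s hs =>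
    hsub ⟨hs.1, hs.2.trans (min_le_left u b)⟩
  set g' : ℝ → X := fun s => if s ≤ T then g s else φ.symm (f 0 + s • v) with hg'
  have hleft' : EqOn g' g (Icc 0 T) := fun s hs => if_pos hs.2
  have hright' : EqOn g' (fun s => φ.symm (f 0 + s • v)) (Icc T (min u b)) := by
    intro s hs
    rcases hs.1.eq_or_lt with rfl | hlt
    · simp only [hg', le_refl, if_true, ← hend]
      exact (φ.left_inv hsrc).symm
    · exact if_neg hlt.not_ge
  refine ⟨min u b, ⟨hS, min_le_right u b⟩, g', ?_, ?_, fun s hs => ?_⟩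
  · rw [← Icc_union_Icc_eq_Icc hT0 hS.le]
    exact (hg.1.congr hleft').union_of_isClosed
      ((φ.continuousOn_symm.comp hpc.continuousOn hright).congr hright') isClosed_Icc isClosed_Icc
  · rw [hleft' ⟨le_rfl, hT0⟩, hg.2.1]
  · rcases le_total s T with h | h
    · rw [hleft' ⟨hs.1, h⟩, hg.2.2 s ⟨hs.1, h⟩]
    · rw [hright' ⟨h, hs.2⟩]
      exact φ.right_inv (hright s ⟨h, hs.2⟩)

lemma exists_segmentLift (hs : ∀ x, HasStrictFDerivAt f (f' x : X →L[ℝ] Y) x)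
    (htop : ∫⁻ t in Ioi (0 : ℝ), ENNReal.ofReal (hadamardWeight f' t) = ⊤) (v : Y) :
    ∃ g : ℝ → X, IsSegmentLift f v 1 g := by
  obtain ⟨L, hL⟩ := exists_lipschitz_segmentLift hs htop v
  have hzero : ∀ s ≤ 0, ∃ g : ℝ → X, IsSegmentLift f v s g := fun s hs0 =>
    ⟨fun _ => 0, continuousOn_const, rfl, fun t ht => by
      have : t = 0 := le_antisymm (ht.2.trans hs0) ht.1
      simp [this]⟩
  -- the parameters up to which a lift exists form a closed set, open to the right
  let S : Set ℝ := {T | ∃ g : ℝ → X, IsSegmentLift f v T g}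
  have hclosed : IsClosed (S ∩ Icc 0 1) := by
    refine isClosed_of_closure_subset fun T hT => ?_
    have hT01 : T ∈ Icc (0 : ℝ) 1 :=
      closure_minimal inter_subset_right isClosed_Icc hT
    refine ⟨?_, hT01⟩
    rcases hT01.1.eq_or_lt with rfl | hT0
    · exact hzero 0 le_rfl
    · refine exists_segmentLift_of_forall_lt hs hT0 hT01.2 hL fun s hsT => ?_
      obtain ⟨t, hst, ⟨g, hg⟩, -⟩ := mem_closure_iff_nhds.1 hT (Ioi s) (Ioi_mem_nhds hsT)
      exact ⟨g, hg.mono (le_of_lt hst)⟩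
  refine hclosed.Icc_subset_of_forall_exists_gt (hzero 0 le_rfl) ?_ ⟨zero_le_one, le_rfl⟩
  rintro T ⟨⟨g, hg⟩, hT⟩ b hTb
  obtain ⟨R, hR, k, hk⟩ := hg.exists_extension hs hT.1 hTb
  exact ⟨R, ⟨k, hk⟩, hR⟩

/-- Lifting the segment from `f 0` to `f x` from the origin leads to `x`: the endpoint is a
continuous function of `x` lifting `f` and fixing the origin, as is the identity. -/
lemma exists_segmentLift_endpoint (hs : ∀ x, HasStrictFDerivAt f (f' x : X →L[ℝ] Y) x)
    (htop : ∫⁻ t in Ioi (0 : ℝ), ENNReal.ofReal (hadamardWeight f' t) = ⊤) (x : X) :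
    ∃ g : ℝ → X, IsSegmentLift f (f x - f 0) 1 g ∧ g 1 = x := by
  choose g hg using fun x : X => exists_segmentLift hs htop (f x - f 0)
  refine ⟨g x, hg x, ?_⟩
  have hlh := isLocalHomeomorph_of_hasStrictFDerivAt hs
  have hfc : Continuous f := hlh.continuous
  let H : C(unitInterval × X, Y) :=
    ⟨fun p => f 0 + (p.1 : ℝ) • (f p.2 - f 0), by fun_prop⟩
  have hcont : Continuous fun p : unitInterval × X => g p.2 p.1 := by
    refine hlh.continuous_lift (T2Space.isSeparatedMap f) H ?_ ?_ fun a => ?_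
    · ext p
      exact (hg p.2).2.2 p.1 p.1.2
    · exact (continuous_const (y := (0 : X))).congr fun a => ((hg a).2.1).symm
    · exact (hg a).1.comp_continuous continuous_subtype_val fun t => t.2
  have hend : Continuous fun x => g x 1 :=
    hcont.comp (Continuous.prodMk_right (1 : unitInterval))
  -- over `x = 0` the segment is constant, and so is its lift
  have h00 : g 0 1 = 0 := by
    have hconst : IsSegmentLift f (f 0 - f 0) 1 (fun _ => (0 : X)) :=
      ⟨continuousOn_const, rfl, fun s _ => by simp⟩
    exact (hg 0).eqOn hs hconst ⟨zero_le_one, le_rfl⟩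
  refine congrFun ((T2Space.isSeparatedMap f).eq_of_comp_eq hlh.isLocallyInjective hend
    continuous_id (funext fun y => ?_) 0 h00) x
  simp [(hg y).2.2 1 ⟨zero_le_one, le_rfl⟩]

end Lifting

theorem hadamard_implies_plastock {X Y : Type*} [NormedAddCommGroup X] [NormedSpace ℝ X] [CompleteSpace X]
    [NormedAddCommGroup Y] [NormedSpace ℝ Y] [CompleteSpace Y]
    (f : X → Y) (f' : X → X ≃L[ℝ] Y)
    (hC1 : ContDiff ℝ 1 f)
    (hdf : ∀ x : X, HasFDerivAt f (f' x : X →L[ℝ] Y) x)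
    (hHad : ∫⁻ ρ in Set.Ioi (0:ℝ),
        ENNReal.ofReal
          (sInf ((fun x : X => ‖((f' x).symm : Y →L[ℝ] X)‖⁻¹) '' Metric.closedBall 0 ρ)) = ⊤) :
    NormCoercive f ∧
      ∀ ρ : ℝ, 0 < ρ → ∃ C : ℝ, ∀ x : X, ‖x‖ ≤ ρ → ‖((f' x).symm : Y →L[ℝ] X)‖ ≤ C := by
  have hs : ∀ x, HasStrictFDerivAt f (f' x : X →L[ℝ] Y) x := fun x =>
    hC1.contDiffAt.hasStrictFDerivAt' (hdf x) one_ne_zero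
  have htop : ∫⁻ t in Ioi (0 : ℝ), ENNReal.ofReal (hadamardWeight f' t) = ⊤ := hHad
  have hm := hadamardWeight_antitoneOn f'
  have h0 := hadamardWeight_nonneg f'
  have hpos : ∀ ρ, 0 ≤ ρ → 0 < hadamardWeight f' ρ := fun ρ => weight_pos hm h0 htop
  refine ⟨?_, fun ρ hρ => ⟨(hadamardWeight f' ρ)⁻¹, fun x hx =>
    norm_symm_le_inv_hadamardWeight f' hx (hpos ρ hρ.le)⟩⟩
  refine tendsto_atTop.2 fun K => ?_
  obtain ⟨R, hR, hlt⟩ := exists_lt_primitive hm h0 htop (K + ‖f 0‖)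
  filter_upwards [preimage_mem_comap (Ici_mem_atTop R)] with x hx
  obtain ⟨g, hg, hgx⟩ := exists_segmentLift_endpoint hs htop x
  have h1 := hg.primitive_norm_le hs hpos (t := 1) ⟨zero_le_one, le_rfl⟩
  rw [hgx, one_mul] at h1
  have h2 := primitive_mono hm h0 hR (mem_Ici.1 hx)
  have h3 := norm_sub_le (f x) (f 0)
  linarith
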